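/- arXiv:2407.11386 — 7 statements merged into one kernel-verified Lean document; each statement's English description precedes it below -/
import Mathlib

section
/- Let a < b be real numbers and let μ and ν be probability measures on ℝ such that for every t in the open interval (a,b), the integrals ∫ exp(-t·x) dμ(x) and ∫ exp(-t·x) dν(x) are both finite and equal. Then μ = ν. -/
/-!
Substituting `s = -t`, the hypotheses say that the moment-generating functions of `μ` and `ν` are
finite and equal on the open interval `(-b, -a)`. Both therefore extend holomorphically to the
vertical strip over that interval, and by the identity theorem the extensions agree on the whole
strip (`eqOn_complexMGF_of_eqOn_mgf`). On the vertical line through a point `s` of the interval,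
the extension is, up to the constant `mgf id μ s`, the characteristic function of the exponentially
tilted measure with density proportional to `exp (s * x)` (`charFun_tilted_mul`). Hence the tilted
measures coincide, and undoing the tilt gives `μ = ν`; tilting is what removes the need for `0` to
lie in the interval.
-/

open MeasureTheory Real

open ProbabilityTheory Filter Topology

lemma integrable_exp_of_lintegral_ne_top {μ : Measure ℝ} {s : ℝ}
    (h : (∫⁻ x, ENNReal.ofReal (Real.exp (s * x)) ∂μ) ≠ ⊤) :
    Integrable (fun x ↦ Real.exp (s * x)) μ :=
  ⟨by fun_prop, (hasFiniteIntegral_iff_ofReal (ae_of_all _ fun _ ↦ by positivity)).2 h.lt_top⟩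

/-- Identity theorem for moment-generating functions: equality on a real interval inside both
domains of finiteness propagates to the vertical strip over that interval. -/
lemma eqOn_complexMGF_of_eqOn_mgf {μ ν : Measure ℝ} {c d : ℝ}
    (hμ : Set.Ioo c d ⊆ integrableExpSet id μ) (hν : Set.Ioo c d ⊆ integrableExpSet id ν)
    (heq : Set.EqOn (mgf id μ) (mgf id ν) (Set.Ioo c d)) :
    Set.EqOn (complexMGF id μ) (complexMGF id ν) {z : ℂ | z.re ∈ Set.Ioo c d} := by
  intro z hz
  have hX : AnalyticOnNhd ℂ (complexMGF id μ) {z : ℂ | z.re ∈ Set.Ioo c d} := fun w hw ↦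
    analyticAt_complexMGF (interior_maximal hμ isOpen_Ioo hw)
  have hY : AnalyticOnNhd ℂ (complexMGF id ν) {z : ℂ | z.re ∈ Set.Ioo c d} := fun w hw ↦
    analyticAt_complexMGF (interior_maximal hν isOpen_Ioo hw)
  refine hX.eqOn_of_preconnected_of_frequently_eq hY
    ((convex_Ioo c d).linear_preimage Complex.reLm).isPreconnected
    (z₀ := ((z.re : ℝ) : ℂ)) (by simpa using hz) ?_ hz
  have h_real : ∃ᶠ x : ℝ in 𝓝[≠] z.re, complexMGF id μ x = complexMGF id ν x := by
    refine Eventually.frequently ?_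
    filter_upwards [nhdsWithin_le_nhds (isOpen_Ioo.mem_nhds hz)] with y hy
    rw [complexMGF_ofReal, complexMGF_ofReal, heq hy]
  have h_tendsto : Tendsto (fun x : ℝ ↦ (x : ℂ)) (𝓝[≠] z.re) (𝓝[≠] (z.re : ℂ)) :=
    Complex.continuous_ofReal.continuousWithinAt.tendsto_nhdsWithin
      fun x hx ↦ by simpa using hx
  exact h_tendsto.frequently h_real

lemma charFun_tilted_mul (μ : Measure ℝ) (s u : ℝ) :
    charFun (μ.tilted fun x ↦ s * x) u = complexMGF id μ (s + u * Complex.I) / mgf id μ s := by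
  rw [← complexMGF_id_mul_I, complexMGF, integral_tilted, complexMGF, ← integral_div]
  refine integral_congr_ae (ae_of_all _ fun x ↦ ?_)
  simp only [mgf, id_eq, Complex.real_smul, Complex.ofReal_div, Complex.ofReal_exp,
    Complex.ofReal_mul, add_mul, Complex.exp_add]
  ring

/-- If the two-sided Laplace transforms of two probability measures `μ` and `ν` on `ℝ`
are finite and equal for all `t` in a nonempty open interval `(a, b)` (not necessarily
containing zero), then `μ = ν`. -/
theorem laplace_transform_unique (a b : ℝ) (hab : a < b)
    (μ ν : Measure ℝ) [IsProbabilityMeasure μ] [IsProbabilityMeasure ν]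
    (hfin : ∀ t ∈ Set.Ioo a b, (∫⁻ x, ENNReal.ofReal (Real.exp (-t * x)) ∂μ) ≠ ⊤)
    (hfin' : ∀ t ∈ Set.Ioo a b, (∫⁻ x, ENNReal.ofReal (Real.exp (-t * x)) ∂ν) ≠ ⊤)
    (heq : ∀ t ∈ Set.Ioo a b,
      (∫⁻ x, ENNReal.ofReal (Real.exp (-t * x)) ∂μ)
        = ∫⁻ x, ENNReal.ofReal (Real.exp (-t * x)) ∂ν) :
    μ = ν := by
  have hneg : ∀ s ∈ Set.Ioo (-b) (-a), -s ∈ Set.Ioo a b := fun s hs ↦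
    ⟨by linarith [hs.2], by linarith [hs.1]⟩
  have hμ : Set.Ioo (-b) (-a) ⊆ integrableExpSet id μ := fun s hs ↦
    integrable_exp_of_lintegral_ne_top (by simpa using hfin (-s) (hneg s hs))
  have hν : Set.Ioo (-b) (-a) ⊆ integrableExpSet id ν := fun s hs ↦
    integrable_exp_of_lintegral_ne_top (by simpa using hfin' (-s) (hneg s hs))
  have hmgf : Set.EqOn (mgf id μ) (mgf id ν) (Set.Ioo (-b) (-a)) := by
    intro s hs
    have h := heq (-s) (hneg s hs)
    rw [neg_neg] at h
    simp only [mgf, id_eq]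
    rw [integral_eq_lintegral_of_nonneg_ae (ae_of_all _ fun _ ↦ by positivity) (by fun_prop),
      integral_eq_lintegral_of_nonneg_ae (ae_of_all _ fun _ ↦ by positivity) (by fun_prop), h]
  obtain ⟨s, hs⟩ := Set.nonempty_Ioo.2 (neg_lt_neg hab)
  have hsμ : Integrable (fun x ↦ Real.exp (s * x)) μ := hμ hs
  have hsν : Integrable (fun x ↦ Real.exp (s * x)) ν := hν hs
  have := isProbabilityMeasure_tilted hsμ
  have := isProbabilityMeasure_tilted hsν
  have htilt : (μ.tilted fun x ↦ s * x) = ν.tilted fun x ↦ s * x := by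
    refine Measure.ext_of_charFun (funext fun u ↦ ?_)
    rw [charFun_tilted_mul, charFun_tilted_mul, hmgf hs,
      eqOn_complexMGF_of_eqOn_mgf hμ hν hmgf (by simpa using hs)]
  rw [← tilted_neg_same hsμ, htilt, tilted_neg_same hsν]
end

section
/- Let X be a real random variable on a probability space and let q > 0. The following three conditions are equivalent: (1) there exists K₁ > 0 such that for all t ≥ 0, P(|X| > t) ≤ 2·exp(-(t/K₁)^q); (2) there exists K₂ > 0 such that for all real p ≥ 1, (E[|X|^p])^{1/p} ≤ K₂·p^{1/q} (in particular E[|X|^p] < ∞); (3) there exists K₃ > 0 such that for all λ with 0 < λ ≤ 1/K₃, E[exp(λ^q·|X|^q)] ≤ exp(K₃^q·λ^q). -/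
open MeasureTheory Real

/-!
All three conditions are compared with the single statement that `exp (a * |X| ^ q)` has
expectation at most `3` for some `a > 0`.

* The tail bound gives this by the layer-cake formula: with `a = 1 / (2 * K₁ ^ q)` one has
  `P (exp (a * |X| ^ q) > s) ≤ 2 * s ^ (-2)`, whence an expectation of at most `1 + 2`.
* It gives the moment bound through `u ≤ exp u` at `u = a * |X| ^ q / r`, raised to the power
  `r = p / q`.
* It gives the bound on the moment generating function because `L^s` norms of `exp (|X| ^ q)`
  increase with `s` on a probability space.

Both remaining conditions return to the tail bound by Markov's inequality, for the power
`p = (t / (e * K₂)) ^ q` in the case of moments and at `lam ^ q = log 2 / K₃ ^ q` in the case of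
the moment generating function.
-/

section

variable {Ω : Type*} [MeasurableSpace Ω] {P : Measure Ω} {X : Ω → ℝ} {q : ℝ}

lemma exists_exp_moment_of_tail [IsProbabilityMeasure P] (hX : Measurable X) (hq : 0 < q)
    {K : ℝ} (hK : 0 < K)
    (h : ∀ t ≥ (0 : ℝ), P {ω | |X ω| > t} ≤ ENNReal.ofReal (2 * Real.exp (-(t / K) ^ q))) :
    ∃ a > (0 : ℝ), ∫⁻ ω, ENNReal.ofReal (Real.exp (a * |X ω| ^ q)) ∂P ≤ 3 := by
  have hKq : 0 < K ^ q := rpow_pos_of_pos hK q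
  refine ⟨1 / (2 * K ^ q), by positivity, ?_⟩
  set a := 1 / (2 * K ^ q) with ha
  have ha0 : 0 < a := by positivity
  have hmeas : Measurable fun ω => Real.exp (a * |X ω| ^ q) := by fun_prop
  rw [lintegral_eq_lintegral_meas_lt P (Filter.Eventually.of_forall fun ω => (exp_pos _).le)
    hmeas.aemeasurable]
  have hsplit : Set.Ioi (0 : ℝ) = Set.Ioc 0 1 ∪ Set.Ioi 1 :=
    (Set.Ioc_union_Ioi_eq_Ioi zero_le_one).symm
  rw [hsplit]
  refine (lintegral_union_le _ _ _).trans ?_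
  have h1 : ∫⁻ t in Set.Ioc (0 : ℝ) 1, P {ω | t < Real.exp (a * |X ω| ^ q)} ≤ 1 := by
    calc _ ≤ ∫⁻ t in Set.Ioc (0 : ℝ) 1, 1 := lintegral_mono fun t => prob_le_one
      _ = 1 := by simp
  have hpt : ∀ t ∈ Set.Ioi (1 : ℝ), P {ω | t < Real.exp (a * |X ω| ^ q)}
      ≤ ENNReal.ofReal (2 * t ^ (-2 : ℝ)) := by
    intro t ht
    have ht1 : (1 : ℝ) < t := ht
    have hlog : 0 < Real.log t := Real.log_pos ht1
    have hb : 0 ≤ Real.log t / a := by positivity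
    refine (measure_mono ?_).trans ((h ((Real.log t / a) ^ (1 / q)) (by positivity)).trans_eq ?_)
    · intro ω hω
      have hω' : t < Real.exp (a * |X ω| ^ q) := hω
      have h2 : Real.log t / a < |X ω| ^ q := by
        rw [div_lt_iff₀ ha0, mul_comm]
        exact (Real.log_lt_iff_lt_exp (by linarith)).2 hω'
      have h3 := Real.rpow_lt_rpow hb h2 (show 0 < 1 / q by positivity)
      rwa [← Real.rpow_mul (abs_nonneg _), mul_one_div_cancel hq.ne', Real.rpow_one] at h3
    · congr 2
      rw [Real.div_rpow (by positivity) hK.le, ← Real.rpow_mul hb, one_div_mul_cancel hq.ne',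
        Real.rpow_one, Real.rpow_def_of_pos (show 0 < t by linarith)]
      congr 1
      rw [ha]
      field_simp
  have h2 : ∫⁻ t in Set.Ioi (1 : ℝ), P {ω | t < Real.exp (a * |X ω| ^ q)} ≤ 2 := by
    refine (setLIntegral_mono' measurableSet_Ioi hpt).trans ?_
    have hint : IntegrableOn (fun t : ℝ => 2 * t ^ (-2 : ℝ)) (Set.Ioi 1) :=
      (integrableOn_Ioi_rpow_of_lt (by norm_num) one_pos).const_mul 2
    rw [← ofReal_integral_eq_lintegral_ofReal hint]
    · rw [integral_const_mul, integral_Ioi_rpow_of_lt (by norm_num) one_pos]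
      norm_num
    · filter_upwards [self_mem_ae_restrict measurableSet_Ioi] with t ht
      have : (0 : ℝ) < t := lt_trans one_pos ht
      simp only [Pi.zero_apply]
      positivity
  calc _ ≤ (1 : ENNReal) + 2 := add_le_add h1 h2
    _ = 3 := by norm_num

lemma moment_bound_of_exp_moment (hq : 0 < q) {a : ℝ} (ha : 0 < a)
    (h : ∫⁻ ω, ENNReal.ofReal (Real.exp (a * |X ω| ^ q)) ∂P ≤ 3) :
    ∃ K₂ > (0 : ℝ), ∀ p ≥ (1 : ℝ),
      (∫⁻ ω, ENNReal.ofReal (|X ω| ^ p) ∂P) ^ (1 / p) ≤ ENNReal.ofReal (K₂ * p ^ (1 / q)) := by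
  refine ⟨3 * (1 / (q * a)) ^ (1 / q), by positivity, fun p hp => ?_⟩
  have hp0 : 0 < p := by linarith
  set C := (p / (q * a)) ^ (p / q) with hC
  have hC0 : 0 ≤ C := by positivity
  have hpt : ∀ x : ℝ, |x| ^ p ≤ C * Real.exp (a * |x| ^ q) := by
    intro x
    -- `u ≤ exp u` at `u = a * |x| ^ q / (p / q)`
    have h1 : |x| ^ q ≤ p / (q * a) * Real.exp (a * |x| ^ q / (p / q)) := by
      have h2 : a * |x| ^ q / (p / q) ≤ Real.exp (a * |x| ^ q / (p / q)) :=
        (by linarith [Real.add_one_le_exp (a * |x| ^ q / (p / q))])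
      calc |x| ^ q = p / (q * a) * (a * |x| ^ q / (p / q)) := by field_simp
        _ ≤ _ := by gcongr
    have h3 := Real.rpow_le_rpow (by positivity) h1 (show 0 ≤ p / q by positivity)
    rw [← Real.rpow_mul (abs_nonneg _), mul_div_cancel₀ _ hq.ne',
      Real.mul_rpow (by positivity) (exp_pos _).le, ← Real.exp_mul,
      div_mul_cancel₀ _ (by positivity)] at h3
    exact h3
  have hint : ∫⁻ ω, ENNReal.ofReal (|X ω| ^ p) ∂P ≤ ENNReal.ofReal (C * 3) := by
    calc _ ≤ ∫⁻ ω, ENNReal.ofReal C * ENNReal.ofReal (Real.exp (a * |X ω| ^ q)) ∂P := by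
          refine lintegral_mono fun ω => ?_
          rw [← ENNReal.ofReal_mul hC0]
          exact ENNReal.ofReal_le_ofReal (hpt _)
      _ = ENNReal.ofReal C * ∫⁻ ω, ENNReal.ofReal (Real.exp (a * |X ω| ^ q)) ∂P :=
          lintegral_const_mul' _ _ ENNReal.ofReal_ne_top
      _ ≤ ENNReal.ofReal C * 3 := by gcongr
      _ = _ := by rw [ENNReal.ofReal_mul hC0]; norm_num
  refine (ENNReal.rpow_le_rpow hint (by positivity)).trans ?_
  rw [ENNReal.ofReal_rpow_of_nonneg (by positivity) (by positivity)]
  refine ENNReal.ofReal_le_ofReal ?_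
  rw [Real.mul_rpow hC0 (by norm_num), hC, ← Real.rpow_mul (by positivity)]
  have e1 : p / q * (1 / p) = 1 / q := by field_simp
  have e2 : p / (q * a) = 1 / (q * a) * p := by ring
  rw [e1, e2, Real.mul_rpow (by positivity) hp0.le]
  have h3 : (3 : ℝ) ^ (1 / p) ≤ 3 := by
    calc (3 : ℝ) ^ (1 / p) ≤ 3 ^ (1 : ℝ) :=
          Real.rpow_le_rpow_of_exponent_le (by norm_num) ((div_le_one hp0).2 hp)
      _ = 3 := Real.rpow_one 3
  calc _ ≤ (1 / (q * a)) ^ (1 / q) * p ^ (1 / q) * 3 := by gcongr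
    _ = _ := by ring

lemma mgf_bound_of_exp_moment [IsProbabilityMeasure P] (hX : Measurable X) (hq : 0 < q)
    {a : ℝ} (ha : 0 < a)
    (h : ∫⁻ ω, ENNReal.ofReal (Real.exp (a * |X ω| ^ q)) ∂P ≤ 3) :
    ∃ K₃ > (0 : ℝ), ∀ lam : ℝ, 0 < lam → lam ≤ 1 / K₃ →
      (∫⁻ ω, ENNReal.ofReal (Real.exp (lam ^ q * |X ω| ^ q)) ∂P)
        ≤ ENNReal.ofReal (Real.exp (K₃ ^ q * lam ^ q)) := by
  have hlog3 : 1 ≤ Real.log 3 := by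
    rw [Real.le_log_iff_exp_le (by norm_num)]
    linarith [Real.exp_one_lt_d9]
  have hK0 : 0 < (Real.log 3 / a) ^ (1 / q) := by positivity
  have hKq : ((Real.log 3 / a) ^ (1 / q)) ^ q = Real.log 3 / a := by
    rw [← Real.rpow_mul (by positivity), one_div_mul_cancel hq.ne', Real.rpow_one]
  refine ⟨(Real.log 3 / a) ^ (1 / q), hK0, fun lam hl hle => ?_⟩
  rw [hKq]
  have hs0 : 0 < lam ^ q := rpow_pos_of_pos hl q
  have hsa : lam ^ q ≤ a := by
    have h1 := Real.rpow_le_rpow hl.le hle hq.le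
    rw [Real.div_rpow zero_le_one hK0.le, hKq, Real.one_rpow, one_div_div] at h1
    exact h1.trans (div_le_self ha.le hlog3)
  set s := lam ^ q
  have hf : AEStronglyMeasurable (fun ω => Real.exp (|X ω| ^ q)) P :=
    (show Measurable fun ω => Real.exp (|X ω| ^ q) by fun_prop).aestronglyMeasurable
  have hnorm : ∀ r : ℝ, 0 < r → eLpNorm' (fun ω => Real.exp (|X ω| ^ q)) r P
      = (∫⁻ ω, ENNReal.ofReal (Real.exp (r * |X ω| ^ q)) ∂P) ^ (1 / r) := by
    intro r hr
    rw [eLpNorm'_eq_lintegral_enorm]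
    congr 2
    ext ω
    rw [Real.enorm_of_nonneg (exp_pos _).le, ENNReal.ofReal_rpow_of_nonneg (exp_pos _).le hr.le,
      ← Real.exp_mul, mul_comm]
  have hmono := eLpNorm'_le_eLpNorm'_of_exponent_le hs0 hsa P hf
  rw [hnorm s hs0, hnorm a ha] at hmono
  have h2 := ENNReal.rpow_le_rpow
    (hmono.trans (ENNReal.rpow_le_rpow h (show 0 ≤ 1 / a by positivity))) hs0.le
  rw [← ENNReal.rpow_mul, one_div_mul_cancel hs0.ne', ENNReal.rpow_one, ← ENNReal.rpow_mul] at h2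
  refine h2.trans_eq ?_
  rw [show (3 : ENNReal) = ENNReal.ofReal 3 by norm_num,
    ENNReal.ofReal_rpow_of_pos (by norm_num), Real.rpow_def_of_pos (by norm_num)]
  congr 2
  ring

lemma tail_of_moment_bound [IsProbabilityMeasure P] (hX : Measurable X) (hq : 0 < q)
    {K : ℝ} (hK : 0 < K)
    (h : ∀ p ≥ (1 : ℝ),
      (∫⁻ ω, ENNReal.ofReal (|X ω| ^ p) ∂P) ^ (1 / p) ≤ ENNReal.ofReal (K * p ^ (1 / q))) :
    ∃ K₁ > (0 : ℝ), ∀ t ≥ (0 : ℝ),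
      P {ω | |X ω| > t} ≤ ENNReal.ofReal (2 * Real.exp (-(t / K₁) ^ q)) := by
  have hl2 : 0 < Real.log 2 := Real.log_pos (by norm_num)
  have hl2' : Real.log 2 ≤ 1 := by linarith [Real.log_two_lt_d9]
  have he : 0 < Real.exp 1 := exp_pos 1
  refine ⟨Real.exp 1 * K / Real.log 2 ^ (1 / q), by positivity, fun t ht => ?_⟩
  -- The exponent is `log 2 * p`, so that the bound is trivial for `p ≤ 1`.
  set p := (t / (Real.exp 1 * K)) ^ q with hp
  have hexp : (t / (Real.exp 1 * K / Real.log 2 ^ (1 / q))) ^ q = Real.log 2 * p := by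
    rw [div_div_eq_mul_div, mul_comm t, mul_div_assoc, Real.mul_rpow (by positivity) (by positivity),
      ← Real.rpow_mul hl2.le, one_div_mul_cancel hq.ne', Real.rpow_one]
  rw [hexp]
  rcases le_total p 1 with hp1 | hp1
  · refine prob_le_one.trans ?_
    rw [← ENNReal.ofReal_one]
    refine ENNReal.ofReal_le_ofReal ?_
    have h1 : Real.exp (-Real.log 2) ≤ Real.exp (-(Real.log 2 * p)) :=
      Real.exp_le_exp.2 (by nlinarith)
    rw [Real.exp_neg, Real.exp_log (by norm_num)] at h1
    linarith
  · have hp0 : 0 < p := by linarith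
    have ht0 : 0 < t := by
      rcases ht.lt_or_eq with h1 | h1
      · exact h1
      · rw [hp, ← h1, zero_div, Real.zero_rpow hq.ne'] at hp1
        linarith
    have hroot : p ^ (1 / q) = t / (Real.exp 1 * K) := by
      rw [hp, ← Real.rpow_mul (by positivity), mul_one_div_cancel hq.ne', Real.rpow_one]
    have hmom := ENNReal.rpow_le_rpow (h p hp1) hp0.le
    rw [← ENNReal.rpow_mul, one_div_mul_cancel hp0.ne', ENNReal.rpow_one, hroot,
      ENNReal.ofReal_rpow_of_nonneg (by positivity) hp0.le] at hmom
    have htp : 0 < t ^ p := by positivity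
    have hmeas : AEMeasurable (fun ω => ENNReal.ofReal (|X ω| ^ p)) P := by fun_prop
    calc P {ω | |X ω| > t} ≤ P {ω | ENNReal.ofReal (t ^ p) ≤ ENNReal.ofReal (|X ω| ^ p)} :=
          measure_mono fun ω hω => ENNReal.ofReal_le_ofReal
            (Real.rpow_le_rpow ht (le_of_lt hω) hp0.le)
      _ ≤ (∫⁻ ω, ENNReal.ofReal (|X ω| ^ p) ∂P) / ENNReal.ofReal (t ^ p) :=
          meas_ge_le_lintegral_div hmeas (by simpa using htp) ENNReal.ofReal_ne_top
      _ ≤ ENNReal.ofReal ((K * (t / (Real.exp 1 * K))) ^ p) / ENNReal.ofReal (t ^ p) := by gcongr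
      _ = ENNReal.ofReal (Real.exp (-p)) := by
          rw [← ENNReal.ofReal_div_of_pos htp, ← Real.div_rpow (by positivity) ht]
          congr 1
          have : K * (t / (Real.exp 1 * K)) / t = Real.exp (-1) := by
            rw [Real.exp_neg]; field_simp
          rw [this, ← Real.exp_mul, neg_one_mul]
      _ ≤ _ := by
          refine ENNReal.ofReal_le_ofReal ?_
          have h1 : Real.exp (-p) ≤ Real.exp (-(Real.log 2 * p)) :=
            Real.exp_le_exp.2 (by nlinarith)
          linarith [exp_pos (-(Real.log 2 * p))]

lemma tail_of_mgf_bound (hX : Measurable X) (hq : 0 < q)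
    {K : ℝ} (hK : 0 < K)
    (h : ∀ lam : ℝ, 0 < lam → lam ≤ 1 / K →
      (∫⁻ ω, ENNReal.ofReal (Real.exp (lam ^ q * |X ω| ^ q)) ∂P)
        ≤ ENNReal.ofReal (Real.exp (K ^ q * lam ^ q))) :
    ∃ K₁ > (0 : ℝ), ∀ t ≥ (0 : ℝ),
      P {ω | |X ω| > t} ≤ ENNReal.ofReal (2 * Real.exp (-(t / K₁) ^ q)) := by
  have hl2 : 0 < Real.log 2 := Real.log_pos (by norm_num)
  have hl2' : Real.log 2 ≤ 1 := by linarith [Real.log_two_lt_d9]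
  set lam := Real.log 2 ^ (1 / q) / K with hlam
  have hlam0 : 0 < lam := by positivity
  have hle : lam ≤ 1 / K := by
    rw [hlam]
    gcongr
    exact Real.rpow_le_one hl2.le hl2' (by positivity)
  have hlq : K ^ q * lam ^ q = Real.log 2 := by
    rw [← Real.mul_rpow hK.le hlam0.le, hlam, mul_div_cancel₀ _ hK.ne', ← Real.rpow_mul hl2.le,
      one_div_mul_cancel hq.ne', Real.rpow_one]
  have hE := h lam hlam0 hle
  rw [hlq, Real.exp_log (by norm_num)] at hE
  refine ⟨1 / lam, by positivity, fun t ht => ?_⟩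
  have hexp : (t / (1 / lam)) ^ q = lam ^ q * t ^ q := by
    rw [div_div_eq_mul_div, div_one, Real.mul_rpow ht hlam0.le, mul_comm]
  rw [hexp]
  have hpos := exp_pos (lam ^ q * t ^ q)
  have hmeas : AEMeasurable (fun ω => ENNReal.ofReal (Real.exp (lam ^ q * |X ω| ^ q))) P := by
    fun_prop
  calc P {ω | |X ω| > t} ≤ P {ω | ENNReal.ofReal (Real.exp (lam ^ q * t ^ q))
          ≤ ENNReal.ofReal (Real.exp (lam ^ q * |X ω| ^ q))} := by
        refine measure_mono fun ω hω => ENNReal.ofReal_le_ofReal (Real.exp_le_exp.2 ?_)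
        have h1 : t ≤ |X ω| := le_of_lt hω
        gcongr
    _ ≤ (∫⁻ ω, ENNReal.ofReal (Real.exp (lam ^ q * |X ω| ^ q)) ∂P)
          / ENNReal.ofReal (Real.exp (lam ^ q * t ^ q)) :=
        meas_ge_le_lintegral_div hmeas (by simpa using hpos) ENNReal.ofReal_ne_top
    _ ≤ ENNReal.ofReal 2 / ENNReal.ofReal (Real.exp (lam ^ q * t ^ q)) := by gcongr
    _ = _ := by rw [← ENNReal.ofReal_div_of_pos hpos, Real.exp_neg, div_eq_mul_inv]

end

/-- Equivalent characterizations of q-subweibull random variables: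
(1) tail bound, (2) growth rate of absolute moments, (3) MGF bound for `|X|^q`
in an interval around zero. -/
theorem subweibull_characterizations {Ω : Type*} [MeasurableSpace Ω]
    (P : Measure Ω) [IsProbabilityMeasure P] (X : Ω → ℝ) (hX : Measurable X)
    (q : ℝ) (hq : 0 < q) :
    List.TFAE
      [ ∃ K₁ > (0 : ℝ), ∀ t ≥ (0 : ℝ),
          P {ω | |X ω| > t} ≤ ENNReal.ofReal (2 * Real.exp (-(t / K₁) ^ q)),
        ∃ K₂ > (0 : ℝ), ∀ p ≥ (1 : ℝ),
          (∫⁻ ω, ENNReal.ofReal (|X ω| ^ p) ∂P) ^ (1 / p)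
            ≤ ENNReal.ofReal (K₂ * p ^ (1 / q)),
        ∃ K₃ > (0 : ℝ), ∀ lam : ℝ, 0 < lam → lam ≤ 1 / K₃ →
          (∫⁻ ω, ENNReal.ofReal (Real.exp (lam ^ q * |X ω| ^ q)) ∂P)
            ≤ ENNReal.ofReal (Real.exp (K₃ ^ q * lam ^ q)) ] := by
  tfae_have 1 → 2 := by
    rintro ⟨K, hK, h⟩
    obtain ⟨a, ha, h3⟩ := exists_exp_moment_of_tail hX hq hK h
    exact moment_bound_of_exp_moment hq ha h3
  tfae_have 1 → 3 := by
    rintro ⟨K, hK, h⟩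
    obtain ⟨a, ha, h3⟩ := exists_exp_moment_of_tail hX hq hK h
    exact mgf_bound_of_exp_moment hX hq ha h3
  tfae_have 2 → 1 := fun ⟨_, hK, h⟩ => tail_of_moment_bound hX hq hK h
  tfae_have 3 → 1 := fun ⟨_, hK, h⟩ => tail_of_mgf_bound hX hq hK h
  tfae_finish
end

section
/- Let X be a real random variable on a probability space and let q > 0. Then there exists λ > 0 with E[exp(λ^q·|X|^q)] < ∞ if and only if limsup_{p→∞} (E[|X|^p])^{1/p} / p^{1/q} < ∞, where the limsup is taken as the real parameter p → ∞ and is valued in [0,∞] (moments E[|X|^p] being allowed to be infinite). -/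
open MeasureTheory Real Filter

/-!
Both directions compare `exp` with powers. If `M = E[exp(λ^q |X|^q)]` is finite, then
`y ^ s ≤ s ^ s * exp y` with `y = (λ|X|)^q` and `s = p / q` (`rpow_le_mul_exp`) gives
`E|X|^p ≤ (C p^(1/q))^p * M` with `C = λ⁻¹ q^(-1/q)`, and `M^(1/p) ≤ M` for `p ≥ 1` because `M ≥ 1`.
Conversely a finite limsup gives `E|X|^p ≤ (K p^(1/q))^p` for all large `p`. Expanding the
exponential, the `n`-th term of `E[exp(λ^q |X|^q)]` is `λ^(qn) E|X|^(qn) / n!`, which for large `n`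
is at most `(λ^q K^q q e)^n` by `n^n ≤ n! e^n`; `λ` is chosen to make this ratio `1/2`. The finitely
many remaining terms are finite since low moments are dominated by high ones.
-/

/-- The inequality `y ^ (p / q) ≤ (p / q) ^ (p / q) * exp y` at `y = l ^ q * x ^ q`, solved for
`x ^ p`. -/
lemma rpow_le_mul_exp {q l x p : ℝ} (hq : 0 < q) (hl : 0 < l) (hx : 0 ≤ x) (hp : 0 < p) :
    x ^ p ≤ (l⁻¹ * q⁻¹ ^ (1 / q) * p ^ (1 / q)) ^ p * Real.exp (l ^ q * x ^ q) := by
  have hs : 0 < p / q := by positivity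
  have hy : 0 ≤ l ^ q * x ^ q := by positivity
  have h1 : (l ^ q * x ^ q) ≤ (p / q) * Real.exp ((l ^ q * x ^ q) / (p / q)) := by
    have := Real.add_one_le_exp ((l ^ q * x ^ q) / (p / q))
    have h2 : (l ^ q * x ^ q) / (p / q) ≤ Real.exp ((l ^ q * x ^ q) / (p / q)) := by linarith
    rwa [div_le_iff₀' hs] at h2
  have h2 := Real.rpow_le_rpow hy h1 hs.le
  rw [Real.mul_rpow hs.le (Real.exp_pos _).le, ← Real.exp_mul, div_mul_cancel₀ _ hs.ne',
    ← Real.mul_rpow hl.le hx, ← Real.rpow_mul (by positivity),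
    mul_div_cancel₀ _ hq.ne', Real.mul_rpow hl.le hx] at h2
  have h3 : (l⁻¹ * q⁻¹ ^ (1 / q) * p ^ (1 / q)) ^ p = (l ^ p)⁻¹ * (p / q) ^ (p / q) := by
    rw [mul_assoc, ← Real.mul_rpow (by positivity) hp.le, Real.mul_rpow (by positivity)
      (by positivity), ← Real.rpow_mul (by positivity), Real.inv_rpow hl.le]
    congr 2 <;> ring
  rw [h3, mul_assoc, inv_mul_eq_div, le_div_iff₀' (by positivity)]
  rw [Real.mul_rpow hl.le hx] at h2
  exact h2

lemma ofReal_exp_eq_tsum {y : ℝ} (hy : 0 ≤ y) :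
    ENNReal.ofReal (Real.exp y) = ∑' n : ℕ, ENNReal.ofReal (y ^ n / n.factorial) := by
  rw [← ENNReal.ofReal_tsum_of_nonneg (fun n => by positivity)
    (Real.summable_pow_div_factorial y), Real.exp_eq_exp_ℝ, NormedSpace.exp_eq_tsum_div]

/-- Geometric bound, from `n ^ n ≤ n! * exp n`, on the `n`-th term of the exponential series when the
moment of order `q * n` is at most `(K * (q * n) ^ (1 / q)) ^ (q * n)`. -/
lemma term_le {q K l : ℝ} (hq : 0 < q) (hK : 0 < K)
    (hlq : l ^ q = (2 * Real.exp 1 * q * K ^ q)⁻¹) (n : ℕ) :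
    (l ^ q) ^ n / n.factorial * (K * (q * n) ^ (1 / q)) ^ (q * n) ≤ (1 / 2) ^ n := by
  have hn : (0 : ℝ) ≤ n := n.cast_nonneg
  have h1 : (K * (q * n) ^ (1 / q)) ^ (q * n) = (K ^ q * (q * n)) ^ n := by
    rw [Real.rpow_mul_natCast (by positivity), Real.mul_rpow hK.le (by positivity),
      ← Real.rpow_mul (by positivity), one_div_mul_cancel hq.ne', Real.rpow_one]
  have h2 : (n : ℝ) ^ n / n.factorial ≤ Real.exp 1 ^ n := by
    rw [← Real.exp_nat_mul, mul_one]
    exact Real.pow_div_factorial_le_exp _ hn n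
  rw [h1, hlq]
  calc _ = ((2 * Real.exp 1)⁻¹) ^ n * ((n : ℝ) ^ n / n.factorial) := by
        rw [div_mul_eq_mul_div, ← mul_pow, ← mul_div_assoc, ← mul_pow]
        congr 2
        have := (Real.rpow_pos_of_pos hK q).ne'
        field_simp
    _ ≤ ((2 * Real.exp 1)⁻¹) ^ n * Real.exp 1 ^ n := by gcongr
    _ = _ := by
        rw [← mul_pow]
        congr 1
        have := (Real.exp_pos 1).ne'
        field_simp

theorem limsup_lt_top_of_exp {Ω : Type*} [MeasurableSpace Ω]
    (P : Measure Ω) [IsProbabilityMeasure P] (X : Ω → ℝ)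
    (q : ℝ) (hq : 0 < q) (l : ℝ) (hl : 0 < l)
    (hM : (∫⁻ ω, ENNReal.ofReal (Real.exp (l ^ q * |X ω| ^ q)) ∂P) < ⊤) :
      Filter.limsup
        (fun p : ℝ =>
          ((∫⁻ ω, ENNReal.ofReal (|X ω| ^ p) ∂P) ^ (1 / p))
            / ENNReal.ofReal (p ^ (1 / q)))
        Filter.atTop < ⊤ := by
  set M := ∫⁻ ω, ENNReal.ofReal (Real.exp (l ^ q * |X ω| ^ q)) ∂P with hMdef
  have hM1 : 1 ≤ M := by
    calc (1 : ENNReal) = ∫⁻ _, 1 ∂P := by simp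
      _ ≤ M := lintegral_mono fun ω => by
        rw [← ENNReal.ofReal_one]
        exact ENNReal.ofReal_le_ofReal (Real.one_le_exp (by positivity))
  set C := l⁻¹ * q⁻¹ ^ (1 / q) with hC
  have hC0 : 0 < C := by positivity
  refine lt_of_le_of_lt (limsup_le_of_le (a := ENNReal.ofReal C * M) (by isBoundedDefault) ?_)
    (ENNReal.mul_lt_top ENNReal.ofReal_lt_top hM)
  filter_upwards [eventually_ge_atTop (1 : ℝ)] with p hp
  have hp0 : 0 < p := by linarith
  refine ENNReal.div_le_of_le_mul ?_
  have h1 : ∫⁻ ω, ENNReal.ofReal (|X ω| ^ p) ∂P ≤ ENNReal.ofReal (C * p ^ (1 / q)) ^ p * M := by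
    rw [hMdef, ← lintegral_const_mul' _ _ (by simp [hp0.le])]
    refine lintegral_mono fun ω => ?_
    rw [ENNReal.ofReal_rpow_of_nonneg (by positivity) hp0.le, ← ENNReal.ofReal_mul (by positivity)]
    exact ENNReal.ofReal_le_ofReal (rpow_le_mul_exp hq hl (abs_nonneg _) hp0)
  calc _ ≤ (ENNReal.ofReal (C * p ^ (1 / q)) ^ p * M) ^ (1 / p) := by gcongr
    _ = ENNReal.ofReal (C * p ^ (1 / q)) * M ^ (1 / p) := by
      rw [ENNReal.mul_rpow_of_nonneg _ _ (by positivity), ← ENNReal.rpow_mul,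
        mul_one_div_cancel hp0.ne', ENNReal.rpow_one]
    _ ≤ ENNReal.ofReal (C * p ^ (1 / q)) * M := by
      gcongr
      calc M ^ (1 / p) ≤ M ^ (1 : ℝ) :=
            ENNReal.rpow_le_rpow_of_exponent_le hM1 ((div_le_one hp0).2 hp)
        _ = M := ENNReal.rpow_one _
    _ = _ := by rw [ENNReal.ofReal_mul hC0.le]; ring

theorem exists_exp_of_limsup_lt_top {Ω : Type*} [MeasurableSpace Ω]
    (P : Measure Ω) [IsProbabilityMeasure P] (X : Ω → ℝ) (hX : Measurable X)
    (q : ℝ) (hq : 0 < q)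
    (h : Filter.limsup
        (fun p : ℝ =>
          ((∫⁻ ω, ENNReal.ofReal (|X ω| ^ p) ∂P) ^ (1 / p))
            / ENNReal.ofReal (p ^ (1 / q)))
        Filter.atTop < ⊤) :
    ∃ lam > (0 : ℝ), (∫⁻ ω, ENNReal.ofReal (Real.exp (lam ^ q * |X ω| ^ q)) ∂P) < ⊤ := by
  obtain ⟨c, hc, hctop⟩ := exists_between h
  obtain ⟨p₀, hp₀⟩ := eventually_atTop.1 (eventually_lt_of_limsup_lt hc)
  set K := c.toReal + 1 with hKdef
  have hK : 0 < K := by positivity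
  have hcK : c ≤ ENNReal.ofReal K := by
    rw [ENNReal.le_ofReal_iff_toReal_le hctop.ne hK.le]; linarith
  set p₁ := max p₀ 1
  have hp₁ : 1 ≤ p₁ := le_max_right _ _
  have hmom : ∀ p ≥ p₁, ∫⁻ ω, ENNReal.ofReal (|X ω| ^ p) ∂P
      ≤ ENNReal.ofReal ((K * p ^ (1 / q)) ^ p) := by
    intro p hp
    have hp0 : 0 < p := by linarith
    have h1 := ((hp₀ p ((le_max_left _ _).trans hp)).le.trans hcK)
    rw [ENNReal.div_le_iff (by simp; positivity) (by simp), ← ENNReal.ofReal_mul hK.le,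
      one_div, ENNReal.rpow_inv_le_iff hp0,
      ENNReal.ofReal_rpow_of_nonneg (by positivity) hp0.le] at h1
    exact h1
  have hfin : ∀ r : ℝ, 0 ≤ r → ∫⁻ ω, ENNReal.ofReal (|X ω| ^ r) ∂P < ⊤ := by
    intro r hr
    set s := max r p₁
    -- `x ^ r ≤ 1 + x ^ s` whenever `0 ≤ r ≤ s`
    calc _ ≤ ∫⁻ ω, (1 + ENNReal.ofReal (|X ω| ^ s)) ∂P := by
          refine lintegral_mono fun ω => ?_
          rw [← ENNReal.ofReal_one, ← ENNReal.ofReal_add zero_le_one (by positivity)]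
          apply ENNReal.ofReal_le_ofReal
          rcases le_total (|X ω|) 1 with hx | hx
          · have := Real.rpow_le_one (abs_nonneg (X ω)) hx hr
            have : 0 ≤ |X ω| ^ s := by positivity
            linarith
          · have := Real.rpow_le_rpow_of_exponent_le hx (le_max_left r p₁)
            linarith
      _ = 1 + ∫⁻ ω, ENNReal.ofReal (|X ω| ^ s) ∂P := by
          rw [lintegral_add_left measurable_const]; simp
      _ < ⊤ := ENNReal.add_lt_top.2 ⟨by simp,
          (hmom s (le_max_right _ _)).trans_lt ENNReal.ofReal_lt_top⟩
  -- this choice gives `l ^ q * K ^ q * q * e = 1 / 2`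
  set l := ((2 * Real.exp 1 * q * K ^ q)⁻¹) ^ q⁻¹ with hl
  have hlq : l ^ q = (2 * Real.exp 1 * q * K ^ q)⁻¹ :=
    Real.rpow_inv_rpow (by positivity) hq.ne'
  have hl0 : 0 < l := by positivity
  refine ⟨l, hl0, ?_⟩
  set a : ℕ → ENNReal := fun n => ENNReal.ofReal ((l ^ q) ^ n / n.factorial) *
    ∫⁻ ω, ENNReal.ofReal (|X ω| ^ (q * n)) ∂P with ha
  have hsum : ∫⁻ ω, ENNReal.ofReal (Real.exp (l ^ q * |X ω| ^ q)) ∂P = ∑' n, a n := by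
    rw [lintegral_congr fun ω => ofReal_exp_eq_tsum (y := l ^ q * |X ω| ^ q) (by positivity),
      lintegral_tsum fun n => by fun_prop]
    refine tsum_congr fun n => ?_
    simp only [ha]
    rw [← lintegral_const_mul' _ _ ENNReal.ofReal_ne_top]
    refine lintegral_congr fun ω => ?_
    rw [← ENNReal.ofReal_mul (by positivity), Real.rpow_mul_natCast (abs_nonneg _), mul_pow]
    congr 1
    ring
  obtain ⟨N, hN⟩ := exists_nat_ge (p₁ / q)
  rw [hsum, ← ENNReal.summable.sum_add_tsum_nat_add' (k := N)]
  refine ENNReal.add_lt_top.2 ⟨ENNReal.sum_lt_top.2 fun n _ =>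
    ENNReal.mul_lt_top ENNReal.ofReal_lt_top (hfin _ (by positivity)), ?_⟩
  have htail : ∀ n, a (n + N) ≤ ENNReal.ofReal ((1 / 2) ^ n) := by
    intro n
    have hge : p₁ ≤ q * ((n + N : ℕ) : ℝ) := by
      rw [div_le_iff₀' hq] at hN
      refine hN.trans ?_
      gcongr
      omega
    calc a (n + N) ≤ ENNReal.ofReal ((l ^ q) ^ (n + N) / (n + N).factorial) *
          ENNReal.ofReal ((K * (q * (n + N : ℕ)) ^ (1 / q)) ^ (q * (n + N : ℕ))) := by
          simp only [ha]
          gcongr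
          exact hmom _ hge
      _ ≤ ENNReal.ofReal ((1 / 2) ^ (n + N)) := by
          rw [← ENNReal.ofReal_mul (by positivity)]
          exact ENNReal.ofReal_le_ofReal (term_le hq hK hlq (n + N))
      _ ≤ _ := ENNReal.ofReal_le_ofReal
          (pow_le_pow_of_le_one (by norm_num) (by norm_num) (by omega))
  refine (ENNReal.tsum_le_tsum htail).trans_lt ?_
  rw [← ENNReal.ofReal_tsum_of_nonneg (fun n => by positivity) summable_geometric_two]
  exact ENNReal.ofReal_lt_top

/-- A real random variable is q-subweibull iff
`limsup_{p → ∞} (E[|X|^p])^{1/p} / p^{1/q} < ∞`, the limsup being taken over real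
`p → ∞` with values in `[0,∞]`. -/
theorem subweibull_iff_moment_limsup {Ω : Type*} [MeasurableSpace Ω]
    (P : Measure Ω) [IsProbabilityMeasure P] (X : Ω → ℝ) (hX : Measurable X)
    (q : ℝ) (hq : 0 < q) :
    (∃ lam > (0 : ℝ),
        (∫⁻ ω, ENNReal.ofReal (Real.exp (lam ^ q * |X ω| ^ q)) ∂P) < ⊤) ↔
      Filter.limsup
        (fun p : ℝ =>
          ((∫⁻ ω, ENNReal.ofReal (|X ω| ^ p) ∂P) ^ (1 / p))
            / ENNReal.ofReal (p ^ (1 / q)))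
        Filter.atTop < ⊤ :=
  ⟨fun ⟨l, hl, hM⟩ => limsup_lt_top_of_exp P X q hq l hl hM,
    exists_exp_of_limsup_lt_top P X hX q hq⟩
end

section
/- Let q > 1, let μ be a probability measure on ℝ with μ([0,∞)) = 1, and suppose the set {λ > 0 : ∫ exp(λ^q·x^q) dμ(x) < ∞} is nonempty; let R = sSup of this set in [0,∞]. Let θ ∈ ℝ (note ∫ exp(θ·x) dμ(x) < ∞ holds automatically) and let ν be the exponentially tilted measure with density x ↦ exp(θ·x)/∫ exp(θ·y) dμ(y) with respect to μ. Then for every λ with 0 ≤ λ < R, ∫ exp(λ^q·x^q) dν(x) < ∞. -/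
/-!
Choose `b` in the defining set of the radius with `lam < b`. Since `q > 1` and
`lam ^ q < b ^ q`, the linear term `θ * x` is absorbed by `(b ^ q - lam ^ q) * x ^ q` up to
an additive constant (`exists_linear_le_rpow_add`). Hence the integrand of the tilted moment is
bounded, `μ`-almost everywhere, by a constant multiple of `exp (b ^ q * x ^ q)`, which has finite
`μ`-integral.
-/

open MeasureTheory Real

/-- A superlinear power dominates every linear function on `[0, ∞)`, up to a constant. -/
lemma exists_linear_le_rpow_add {q c : ℝ} (hq : 1 < q) (hc : 0 < c) (θ : ℝ) :
    ∃ C : ℝ, ∀ x : ℝ, 0 ≤ x → θ * x ≤ c * x ^ q + C := by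
  -- Beyond the threshold `M = (|θ| / c) ^ (1 / (q - 1))` one has `|θ| ≤ c * x ^ (q - 1)`.
  set M : ℝ := (|θ| / c) ^ (q - 1)⁻¹ with hM
  have hM0 : 0 ≤ M := by positivity
  have hMq : M ^ (q - 1) = |θ| / c :=
    Real.rpow_inv_rpow (by positivity) (by linarith)
  refine ⟨|θ| * M, fun x hx => ?_⟩
  have hθ : θ * x ≤ |θ| * x := mul_le_mul_of_nonneg_right (le_abs_self θ) hx
  have hxq : 0 ≤ c * x ^ q := by positivity
  have hC : 0 ≤ |θ| * M := by positivity
  rcases le_total x M with h | h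
  · have : |θ| * x ≤ |θ| * M := mul_le_mul_of_nonneg_left h (abs_nonneg θ)
    linarith
  · have h1 : |θ| / c ≤ x ^ (q - 1) :=
      hMq ▸ Real.rpow_le_rpow hM0 h (by linarith)
    have h2 : |θ| ≤ c * x ^ (q - 1) := by
      rwa [div_le_iff₀' hc] at h1
    have h3 : x ^ q = x ^ (q - 1) * x := by
      rw [← Real.rpow_add_one' hx (by linarith), sub_add_cancel]
    have h4 : |θ| * x ≤ c * x ^ q := by
      rw [h3, ← mul_assoc]
      exact mul_le_mul_of_nonneg_right h2 hx
    linarith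

/-- Preservation of nonnegative subweibull tails under exponential tilting, finiteness
part: if `μ` is concentrated on `[0,∞)`, is q-subweibull (`q > 1`) with radius of
convergence `R`, then for any tilting parameter `θ` the tilted measure has finite
subweibull moment for every `0 ≤ λ < R`. -/
theorem tilted_subweibull_nonneg_lt (q : ℝ) (hq : 1 < q)
    (μ : Measure ℝ) [IsProbabilityMeasure μ] (hpos : μ (Set.Ici (0 : ℝ)) = 1)
    (hne : {lam : ℝ | 0 < lam ∧
      (∫⁻ x, ENNReal.ofReal (Real.exp (lam ^ q * x ^ q)) ∂μ) < ⊤}.Nonempty)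
    (θ : ℝ) :
    ∀ lam : ℝ, 0 ≤ lam →
      ENNReal.ofReal lam
          < sSup (ENNReal.ofReal '' {lam' : ℝ | 0 < lam' ∧
              (∫⁻ x, ENNReal.ofReal (Real.exp (lam' ^ q * x ^ q)) ∂μ) < ⊤}) →
      (∫⁻ x, ENNReal.ofReal (Real.exp (lam ^ q * x ^ q))
          ∂(μ.tilted (fun x => θ * x))) < ⊤ := by
  intro lam hlam hlt
  obtain ⟨_, ⟨b, ⟨hb0, hbfin⟩, rfl⟩, hlb⟩ := lt_sSup_iff.mp hlt
  have hlb' : lam < b := (ENNReal.ofReal_lt_ofReal_iff hb0).mp hlb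
  have hc : 0 < b ^ q - lam ^ q :=
    sub_pos.mpr (Real.rpow_lt_rpow hlam hlb' (by linarith))
  obtain ⟨C, hC⟩ := exists_linear_le_rpow_add hq hc θ
  have hae : ∀ᵐ x ∂μ, 0 ≤ x := by
    have h := (prob_compl_eq_zero_iff (μ := μ) (measurableSet_Ici (a := (0 : ℝ)))).mpr hpos
    filter_upwards [compl_mem_ae_iff.mpr h] with x hx
    simpa using hx
  rw [lintegral_tilted]
  set Z : ℝ := ∫ x, Real.exp (θ * x) ∂μ with hZ
  have hZ0 : 0 ≤ Z := integral_nonneg fun x => (Real.exp_pos _).le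
  calc
    _ ≤ ∫⁻ x, ENNReal.ofReal (Real.exp C / Z) *
          ENNReal.ofReal (Real.exp (b ^ q * x ^ q)) ∂μ := by
      refine lintegral_mono_ae ?_
      filter_upwards [hae] with x hx
      rw [← ENNReal.ofReal_mul (by positivity), ← ENNReal.ofReal_mul (by positivity)]
      refine ENNReal.ofReal_le_ofReal ?_
      rw [div_mul_eq_mul_div, div_mul_eq_mul_div, ← Real.exp_add, ← Real.exp_add]
      refine div_le_div_of_nonneg_right (Real.exp_le_exp.mpr ?_) hZ0
      linarith [hC x hx, sub_mul (b ^ q) (lam ^ q) (x ^ q)]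
    _ = ENNReal.ofReal (Real.exp C / Z) *
          ∫⁻ x, ENNReal.ofReal (Real.exp (b ^ q * x ^ q)) ∂μ :=
      lintegral_const_mul' _ _ ENNReal.ofReal_ne_top
    _ < ⊤ := ENNReal.mul_lt_top ENNReal.ofReal_lt_top hbfin
end

section
/- Let q > 1, let μ be a probability measure on ℝ with μ([0,∞)) = 1, and suppose the set {λ > 0 : ∫ exp(λ^q·x^q) dμ(x) < ∞} is nonempty; let R = sSup of this set in [0,∞]. Let θ ∈ ℝ and let ν be the exponentially tilted measure with density x ↦ exp(θ·x)/∫ exp(θ·y) dμ(y) with respect to μ. Then for every real λ > R, ∫ exp(λ^q·x^q) dν(x) = ∞. Together with the finiteness below R, the tilted measure ν has the same radius of convergence R as μ. -/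
/-!
Since `q > 1`, every linear function is dominated on `[0,∞)` by `a * x ^ q + K`, for any `a > 0`
and a suitable constant `K` (`linear_le_mul_rpow_add`). Applied with `a = l ^ q`, where `l` is a
member of the given nonempty set, this shows that `exp (θ * x)` is `μ`-integrable, so that the
tilted measure is a genuine probability measure with a positive finite normalizing constant `Z`.

Given `lam > R`, choose `t` with `R < t < lam`; then `exp (t ^ q * x ^ q)` has infinite
`μ`-integral. Applied with `a = lam ^ q - t ^ q > 0` to the linear function `-θ * x`, the
domination gives `exp (t ^ q * x ^ q) ≤ exp K * Z * (exp (θ * x) / Z) * exp (lam ^ q * x ^ q)`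
on `[0,∞)`, so the moment of order `lam` under the tilted measure is infinite as well.
-/

open MeasureTheory Real

lemma linear_le_mul_rpow_add {q : ℝ} (hq : 1 < q) {a : ℝ} (ha : 0 < a) (c : ℝ) :
    ∃ K : ℝ, ∀ x : ℝ, 0 ≤ x → c * x ≤ a * x ^ q + K := by
  -- Beyond `M` the bound `|c| ≤ a * x ^ (q - 1)` suffices; below `M` the constant `|c| * |M|` does.
  obtain ⟨M, hM⟩ := Filter.eventually_atTop.1
    ((tendsto_rpow_atTop (sub_pos.2 hq)).eventually_ge_atTop (|c| / a))
  refine ⟨|c| * |M|, fun x hx => ?_⟩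
  have hcx : c * x ≤ |c| * x := mul_le_mul_of_nonneg_right (le_abs_self c) hx
  rcases le_total M x with h | h
  · have h1 : |c| ≤ x ^ (q - 1) * a := (div_le_iff₀ ha).1 (hM x h)
    have h2 : x ^ q = x ^ (q - 1) * x := by
      rcases hx.eq_or_lt with rfl | hx0
      · rw [mul_zero, zero_rpow (by linarith)]
      · rw [rpow_sub_one hx0.ne', div_mul_cancel₀ _ hx0.ne']
    have h3 : |c| * x ≤ x ^ (q - 1) * a * x := mul_le_mul_of_nonneg_right h1 hx
    have h4 : 0 ≤ |c| * |M| := by positivity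
    rw [h2]
    linarith
  · have h1 : |c| * x ≤ |c| * |M| :=
      mul_le_mul_of_nonneg_left (h.trans (le_abs_self M)) (abs_nonneg c)
    have h2 : 0 ≤ a * x ^ q := mul_nonneg ha.le (rpow_nonneg hx q)
    linarith

/-- Preservation of nonnegative subweibull tails under exponential tilting, infiniteness
part: if `μ` is concentrated on `[0,∞)`, is q-subweibull (`q > 1`) with radius of
convergence `R`, then for any tilting parameter `θ` the tilted measure has infinite
subweibull moment for every real `λ > R`; hence the tilted measure has the same radius
of convergence. -/
theorem tilted_subweibull_nonneg_gt (q : ℝ) (hq : 1 < q)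
    (μ : Measure ℝ) [IsProbabilityMeasure μ] (hpos : μ (Set.Ici (0 : ℝ)) = 1)
    (hne : {lam : ℝ | 0 < lam ∧
      (∫⁻ x, ENNReal.ofReal (Real.exp (lam ^ q * x ^ q)) ∂μ) < ⊤}.Nonempty)
    (θ : ℝ) :
    ∀ lam : ℝ,
      sSup (ENNReal.ofReal '' {lam' : ℝ | 0 < lam' ∧
          (∫⁻ x, ENNReal.ofReal (Real.exp (lam' ^ q * x ^ q)) ∂μ) < ⊤})
        < ENNReal.ofReal lam →
      (∫⁻ x, ENNReal.ofReal (Real.exp (lam ^ q * x ^ q))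
          ∂(μ.tilted (fun x => θ * x))) = ⊤ := by
  intro lam hlam
  have hae : ∀ᵐ x ∂μ, 0 ≤ x := by
    have h : ∀ᵐ x ∂μ, x ∈ Set.Ici (0 : ℝ) := (mem_ae_iff_prob_eq_one measurableSet_Ici).2 hpos
    exact h
  have hint : Integrable (fun x => exp (θ * x)) μ := by
    obtain ⟨l, hl, hfin⟩ := hne
    obtain ⟨K, hK⟩ := linear_le_mul_rpow_add hq (rpow_pos_of_pos hl q) θ
    refine ⟨by fun_prop, ?_⟩
    rw [hasFiniteIntegral_iff_ofReal (ae_of_all _ fun x => (exp_pos _).le)]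
    calc ∫⁻ x, ENNReal.ofReal (exp (θ * x)) ∂μ
        ≤ ∫⁻ x, ENNReal.ofReal (exp K) * ENNReal.ofReal (exp (l ^ q * x ^ q)) ∂μ := by
          refine lintegral_mono_ae ?_
          filter_upwards [hae] with x hx
          rw [← ENNReal.ofReal_mul (exp_pos _).le, ← exp_add]
          refine ENNReal.ofReal_le_ofReal (exp_le_exp.2 ?_)
          linarith [hK x hx]
      _ = ENNReal.ofReal (exp K) * ∫⁻ x, ENNReal.ofReal (exp (l ^ q * x ^ q)) ∂μ :=
          lintegral_const_mul' _ _ ENNReal.ofReal_ne_top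
      _ < ⊤ := ENNReal.mul_lt_top ENNReal.ofReal_lt_top hfin
  have hZ : 0 < ∫ x, exp (θ * x) ∂μ := integral_exp_pos hint
  obtain ⟨s, hRs, hs⟩ := exists_between hlam
  obtain ⟨t, rfl⟩ : ∃ t : ℝ, ENNReal.ofReal t = s :=
    ⟨s.toReal, ENNReal.ofReal_toReal hs.ne_top⟩
  have ht : 0 < t := ENNReal.ofReal_pos.1 (pos_of_gt hRs)
  have htl : t < lam := (ENNReal.ofReal_lt_ofReal_iff'.1 hs).1
  have htop : ∫⁻ x, ENNReal.ofReal (exp (t ^ q * x ^ q)) ∂μ = ⊤ := by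
    by_contra h
    exact hRs.not_ge (le_sSup ⟨t, ⟨ht, lt_top_iff_ne_top.2 h⟩, rfl⟩)
  obtain ⟨K, hK⟩ := linear_le_mul_rpow_add hq
    (sub_pos.2 (rpow_lt_rpow ht.le htl (by linarith : 0 < q))) (-θ)
  rw [lintegral_tilted]
  set Z := ∫ x, exp (θ * x) ∂μ
  have hle : (⊤ : ENNReal) ≤ ENNReal.ofReal (exp K * Z) *
      ∫⁻ x, ENNReal.ofReal (exp (θ * x) / Z) * ENNReal.ofReal (exp (lam ^ q * x ^ q)) ∂μ := by
    rw [← htop, ← lintegral_const_mul' _ _ ENNReal.ofReal_ne_top]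
    refine lintegral_mono_ae ?_
    filter_upwards [hae] with x hx
    rw [← ENNReal.ofReal_mul (by positivity), ← ENNReal.ofReal_mul (by positivity)]
    refine ENNReal.ofReal_le_ofReal ?_
    have h : exp K * Z * (exp (θ * x) / Z * exp (lam ^ q * x ^ q))
        = exp (K + θ * x + lam ^ q * x ^ q) := by
      rw [exp_add, exp_add]
      field_simp
    rw [h, exp_le_exp]
    linarith [hK x hx]
  by_contra h
  exact (ENNReal.mul_lt_top ENNReal.ofReal_lt_top (lt_top_iff_ne_top.2 h)).not_ge hle
end

section
/- Let q > 1, let μ be a probability measure on ℝ, and suppose the set {λ > 0 : ∫ exp(λ^q·|x|^q) dμ(x) < ∞} is nonempty (μ is q-subweibull); let R = sSup of this set in [0,∞]. Let θ ∈ ℝ (note ∫ exp(θ·x) dμ(x) < ∞ holds automatically) and let ν be the exponentially tilted measure with density x ↦ exp(θ·x)/∫ exp(θ·y) dμ(y) with respect to μ. Then ν is q-subweibull with the same radius of convergence: for every λ with 0 ≤ λ < R, ∫ exp(λ^q·|z|^q) dν(z) < ∞, and for every real λ > R, ∫ exp(λ^q·|z|^q) dν(z) = ∞. -/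
open MeasureTheory Real

/-!
Since `q > 1`, a linear function of `|x|` is dominated by any positive multiple of `|x| ^ q` up to
an additive constant. Hence for `0 ≤ a < b` the tilting factor `exp (θ * x)` is
absorbed, up to a multiplicative constant, by passing from `exp (a ^ q * |x| ^ q)` to
`exp (b ^ q * |x| ^ q)` (`exists_linear_add_le`). So a finite `μ`-moment at `b` gives a finite
`ν`-moment at every smaller `a` (`lintegral_tilted_lt_top`), and conversely a finite `ν`-moment at
`b` gives a finite `μ`-moment at every smaller `a`, because tilting `ν` by `-θ` recovers `μ`
(`lintegral_lt_top_of_tilted`). Choosing the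
second parameter strictly between `λ` and the radius of convergence proves both halves.
-/

lemma exists_linear_add_le {q : ℝ} (hq : 1 < q) {a b : ℝ} (ha : 0 ≤ a) (hab : a < b) (θ : ℝ) :
    ∃ C : ℝ, ∀ x : ℝ, θ * x + a ^ q * |x| ^ q ≤ b ^ q * |x| ^ q + C := by
  have hc : 0 < b ^ q - a ^ q := sub_pos.2 (Real.rpow_lt_rpow ha hab (by linarith))
  set c := b ^ q - a ^ q with hcdef
  -- `M` is the point where `c * t ^ q` overtakes `|θ| * t`.
  set M := (|θ| / c) ^ (q - 1)⁻¹ with hM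
  have hM0 : 0 ≤ M := by positivity
  refine ⟨|θ| * M, fun x => ?_⟩
  have h1 : θ * x ≤ |θ| * |x| := by rw [← abs_mul]; exact le_abs_self _
  have hxq : 0 ≤ c * |x| ^ q := by positivity
  have h2 : |θ| * |x| ≤ c * |x| ^ q + |θ| * M := by
    rcases le_or_gt |x| M with h | h
    · have := mul_le_mul_of_nonneg_left h (abs_nonneg θ)
      linarith
    · have hx : 0 < |x| := hM0.trans_lt h
      have h3 : |θ| / c ≤ |x| ^ (q - 1) := by
        calc |θ| / c = M ^ (q - 1) := by
              rw [hM, Real.rpow_inv_rpow (by positivity) (by linarith)]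
          _ ≤ |x| ^ (q - 1) := Real.rpow_le_rpow hM0 h.le (by linarith)
      have h4 : |θ| ≤ |x| ^ (q - 1) * c := (div_le_iff₀ hc).1 h3
      have h5 : |x| ^ q = |x| ^ (q - 1) * |x| := by
        rw [← Real.rpow_add_one hx.ne', sub_add_cancel]
      have h6 := mul_le_mul_of_nonneg_right h4 hx.le
      have h7 : 0 ≤ |θ| * M := by positivity
      rw [h5]
      nlinarith
  have h8 : c * |x| ^ q = b ^ q * |x| ^ q - a ^ q * |x| ^ q := by rw [hcdef]; ring
  linarith

lemma lintegral_tilted_lt_top {q : ℝ} (hq : 1 < q) (μ : Measure ℝ) (θ : ℝ) {a b : ℝ}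
    (ha : 0 ≤ a) (hab : a < b)
    (hb : (∫⁻ x, ENNReal.ofReal (Real.exp (b ^ q * |x| ^ q)) ∂μ) < ⊤) :
    (∫⁻ z, ENNReal.ofReal (Real.exp (a ^ q * |z| ^ q)) ∂(μ.tilted (fun x => θ * x))) < ⊤ := by
  obtain ⟨C, hC⟩ := exists_linear_add_le hq ha hab θ
  rw [lintegral_tilted]
  set Z := ∫ x, Real.exp (θ * x) ∂μ
  have hZ : 0 ≤ Z := integral_nonneg fun x => (Real.exp_pos _).le
  calc (∫⁻ x, ENNReal.ofReal (Real.exp (θ * x) / Z) *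
          ENNReal.ofReal (Real.exp (a ^ q * |x| ^ q)) ∂μ)
      ≤ ∫⁻ x, ENNReal.ofReal (Real.exp C / Z) *
          ENNReal.ofReal (Real.exp (b ^ q * |x| ^ q)) ∂μ := by
        refine lintegral_mono fun x => ?_
        dsimp only
        rw [← ENNReal.ofReal_mul (by positivity), ← ENNReal.ofReal_mul (by positivity)]
        apply ENNReal.ofReal_le_ofReal
        rw [div_mul_eq_mul_div, div_mul_eq_mul_div, ← Real.exp_add, ← Real.exp_add]
        have := hC x
        gcongr ?_ / Z
        exact Real.exp_le_exp.2 (by linarith)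
    _ = ENNReal.ofReal (Real.exp C / Z) *
          ∫⁻ x, ENNReal.ofReal (Real.exp (b ^ q * |x| ^ q)) ∂μ :=
        lintegral_const_mul' _ _ ENNReal.ofReal_ne_top
    _ < ⊤ := ENNReal.mul_lt_top ENNReal.ofReal_lt_top hb

/-- The exponential moments are finite because the case `a = 0` of `exists_linear_add_le` bounds
`exp (θ * x)` by a multiple of `exp (b ^ q * |x| ^ q)`. -/
lemma integrable_exp_mul_of_lintegral_lt_top {q : ℝ} (hq : 1 < q) (μ : Measure ℝ) (θ : ℝ) {b : ℝ}
    (hb0 : 0 < b) (hb : (∫⁻ x, ENNReal.ofReal (Real.exp (b ^ q * |x| ^ q)) ∂μ) < ⊤) :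
    Integrable (fun x => Real.exp (θ * x)) μ := by
  obtain ⟨C, hC⟩ := exists_linear_add_le hq le_rfl hb0 θ
  have hmeas : Measurable fun x : ℝ => Real.exp (b ^ q * |x| ^ q) := by fun_prop
  have hint : Integrable (fun x => Real.exp (b ^ q * |x| ^ q)) μ :=
    ⟨hmeas.aestronglyMeasurable,
      (hasFiniteIntegral_iff_ofReal (ae_of_all _ fun x => (Real.exp_pos _).le)).2 hb⟩
  refine (hint.mul_const (Real.exp C)).mono' (by fun_prop) (ae_of_all _ fun x => ?_)
  rw [Real.norm_of_nonneg (Real.exp_pos _).le, ← Real.exp_add]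
  have := hC x
  rw [Real.zero_rpow (by linarith), zero_mul, add_zero] at this
  exact Real.exp_le_exp.2 this

/-- Integrability of `exp (θ * x)` is essential here: without it `μ.tilted` is the zero measure. -/
lemma lintegral_lt_top_of_tilted {q : ℝ} (hq : 1 < q) (μ : Measure ℝ) [IsProbabilityMeasure μ] (θ : ℝ)
    (hint : Integrable (fun x => Real.exp (θ * x)) μ) {a b : ℝ} (ha : 0 ≤ a) (hab : a < b)
    (hb : (∫⁻ z, ENNReal.ofReal (Real.exp (b ^ q * |z| ^ q))
      ∂(μ.tilted (fun x => θ * x))) < ⊤) :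
    (∫⁻ x, ENNReal.ofReal (Real.exp (a ^ q * |x| ^ q)) ∂μ) < ⊤ := by
  -- Tilting `μ.tilted (θ * ·)` back by `-θ` recovers `μ`.
  have h := lintegral_tilted_lt_top hq (μ.tilted (fun x => θ * x)) (-θ) ha hab hb
  have hback : (μ.tilted (fun x => θ * x)).tilted (fun x => -θ * x) = μ := by
    convert tilted_neg_same hint using 2
    ext x
    simp
  rwa [hback] at h

/-- Preservation of subweibull tails under exponential tilting (`q > 1`): if `μ` is
q-subweibull with radius of convergence `R`, then for any tilting parameter `θ` the
tilted measure is q-subweibull with the same radius of convergence `R`: its subweibull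
moment is finite for every `0 ≤ λ < R` and infinite for every real `λ > R`. -/
theorem tilted_subweibull_general (q : ℝ) (hq : 1 < q)
    (μ : Measure ℝ) [IsProbabilityMeasure μ]
    (hne : {lam : ℝ | 0 < lam ∧
      (∫⁻ x, ENNReal.ofReal (Real.exp (lam ^ q * |x| ^ q)) ∂μ) < ⊤}.Nonempty)
    (θ : ℝ) :
    (∀ lam : ℝ, 0 ≤ lam →
        ENNReal.ofReal lam
            < sSup (ENNReal.ofReal '' {lam' : ℝ | 0 < lam' ∧
                (∫⁻ x, ENNReal.ofReal (Real.exp (lam' ^ q * |x| ^ q)) ∂μ) < ⊤}) →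
        (∫⁻ z, ENNReal.ofReal (Real.exp (lam ^ q * |z| ^ q))
            ∂(μ.tilted (fun x => θ * x))) < ⊤) ∧
      (∀ lam : ℝ,
        sSup (ENNReal.ofReal '' {lam' : ℝ | 0 < lam' ∧
            (∫⁻ x, ENNReal.ofReal (Real.exp (lam' ^ q * |x| ^ q)) ∂μ) < ⊤})
          < ENNReal.ofReal lam →
        (∫⁻ z, ENNReal.ofReal (Real.exp (lam ^ q * |z| ^ q))
            ∂(μ.tilted (fun x => θ * x))) = ⊤) := by
  refine ⟨fun lam h0 hlam => ?_, fun lam hlam => ?_⟩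
  · obtain ⟨_, ⟨b, ⟨hb0, hb⟩, rfl⟩, hlb⟩ := lt_sSup_iff.1 hlam
    exact lintegral_tilted_lt_top hq μ θ h0 ((ENNReal.ofReal_lt_ofReal_iff hb0).1 hlb) hb
  · obtain ⟨b, hb0, hb⟩ := hne
    have hint := integrable_exp_mul_of_lintegral_lt_top hq μ θ hb0 hb
    obtain ⟨r, hRr, hrl⟩ := exists_between hlam
    have hr : r ≠ ⊤ := (hrl.trans ENNReal.ofReal_lt_top).ne
    have hr0 : 0 < r.toReal := ENNReal.toReal_pos (bot_le.trans_lt hRr).ne' hr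
    by_contra hfin
    refine hRr.not_ge (le_sSup ⟨r.toReal, ⟨hr0, ?_⟩, ENNReal.ofReal_toReal hr⟩)
    exact lintegral_lt_top_of_tilted hq μ θ hint hr0.le
      ((ENNReal.lt_ofReal_iff_toReal_lt hr).1 hrl) (lt_top_iff_ne_top.2 hfin)
end

section
/- Let q ≥ 1 and let μ be a probability measure on ℝ such that ∫ exp(λ^q·|x|^q) dμ(x) < ∞ for every λ > 0 (μ is strictly q-subweibull). Then for every θ ∈ ℝ the tilting is well-defined, i.e., ∫ exp(θ·x) dμ(x) < ∞, and the exponentially tilted measure ν with density x ↦ exp(θ·x)/∫ exp(θ·y) dμ(y) with respect to μ is also strictly q-subweibull: ∫ exp(λ^q·|z|^q) dν(z) < ∞ for every λ > 0. -/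
/-!
Since `q ≥ 1`, `|x| ≤ 1 + |x| ^ q`, so `θ * x + a * |x| ^ q ≤ |θ| + (|θ| + a) * |x| ^ q`.
As the hypothesis on `μ` holds for every scale, it gives the integrability of
`exp (c * |x| ^ q)` for every `c > 0`, which absorbs the linear term. Taking `a = 0` shows that
the tilting is well-defined; taking `a = lam ^ q` bounds the exponential moments of the tilted
measure, whose normalising constant only contributes a finite factor.
-/

open MeasureTheory Real

/-- All integrals `∫ exp (θ * x + a * |x| ^ q) dμ` of a strictly `q`-subweibull measure are finite
when `q ≥ 1`. -/
lemma lintegral_exp_linear_add_rpow_lt_top {q : ℝ} (hq : 1 ≤ q) {μ : Measure ℝ}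
    (hstrict : ∀ lam > (0 : ℝ),
      (∫⁻ x, ENNReal.ofReal (Real.exp (lam ^ q * |x| ^ q)) ∂μ) < ⊤)
    (θ : ℝ) {a : ℝ} (ha : 0 ≤ a) :
    (∫⁻ x, ENNReal.ofReal (Real.exp (θ * x + a * |x| ^ q)) ∂μ) < ⊤ := by
  -- The summand `1` keeps the scale positive when `θ = 0` and `a = 0`.
  have hc : 0 < |θ| + a + 1 := by positivity
  have hfin := hstrict ((|θ| + a + 1) ^ q⁻¹) (by positivity)
  rw [Real.rpow_inv_rpow hc.le (by linarith)] at hfin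
  calc (∫⁻ x, ENNReal.ofReal (Real.exp (θ * x + a * |x| ^ q)) ∂μ)
      ≤ ∫⁻ x, ENNReal.ofReal (Real.exp |θ|)
          * ENNReal.ofReal (Real.exp ((|θ| + a + 1) * |x| ^ q)) ∂μ := by
        refine lintegral_mono fun x => ?_
        rw [← ENNReal.ofReal_mul (Real.exp_pos _).le, ← Real.exp_add]
        refine ENNReal.ofReal_le_ofReal (Real.exp_le_exp.2 ?_)
        have hpow : 0 ≤ |x| ^ q := by positivity
        have habs : |x| ≤ 1 + |x| ^ q := by
          rcases le_total |x| 1 with h | h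
          · linarith
          · linarith [Real.self_le_rpow_of_one_le h hq]
        have hlin : θ * x ≤ |θ| * |x| := (le_abs_self _).trans (abs_mul θ x).le
        nlinarith [mul_le_mul_of_nonneg_left habs (abs_nonneg θ)]
    _ = ENNReal.ofReal (Real.exp |θ|)
          * ∫⁻ x, ENNReal.ofReal (Real.exp ((|θ| + a + 1) * |x| ^ q)) ∂μ :=
        lintegral_const_mul' _ _ ENNReal.ofReal_ne_top
    _ < ⊤ := ENNReal.mul_lt_top ENNReal.ofReal_lt_top hfin

/-- Exponential tilting preserves the strictly q-subweibull property for `q ≥ 1`: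
tilting is well-defined for every `θ ∈ ℝ`, and the tilted measure is again strictly
q-subweibull. -/
theorem tilted_strictly_subweibull (q : ℝ) (hq : 1 ≤ q)
    (μ : Measure ℝ) [IsProbabilityMeasure μ]
    (hstrict : ∀ lam > (0 : ℝ),
      (∫⁻ x, ENNReal.ofReal (Real.exp (lam ^ q * |x| ^ q)) ∂μ) < ⊤) :
    ∀ θ : ℝ,
      (∫⁻ x, ENNReal.ofReal (Real.exp (θ * x)) ∂μ) < ⊤ ∧
        ∀ lam > (0 : ℝ),
          (∫⁻ z, ENNReal.ofReal (Real.exp (lam ^ q * |z| ^ q))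
              ∂(μ.tilted (fun x => θ * x))) < ⊤ := by
  intro θ
  refine ⟨by simpa using lintegral_exp_linear_add_rpow_lt_top hq hstrict θ le_rfl,
    fun lam hlam => ?_⟩
  have hfin := lintegral_exp_linear_add_rpow_lt_top hq hstrict θ (a := lam ^ q) (by positivity)
  rw [lintegral_tilted]
  have hfactor : ∀ x : ℝ,
      ENNReal.ofReal (Real.exp (θ * x) / ∫ y, Real.exp (θ * y) ∂μ)
          * ENNReal.ofReal (Real.exp (lam ^ q * |x| ^ q))
        = ENNReal.ofReal (∫ y, Real.exp (θ * y) ∂μ)⁻¹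
          * ENNReal.ofReal (Real.exp (θ * x + lam ^ q * |x| ^ q)) := by
    intro x
    rw [div_eq_mul_inv, ENNReal.ofReal_mul (Real.exp_pos _).le, Real.exp_add,
      ENNReal.ofReal_mul (Real.exp_pos _).le]
    ring
  simp_rw [hfactor]
  rw [lintegral_const_mul' _ _ ENNReal.ofReal_ne_top]
  exact ENNReal.mul_lt_top ENNReal.ofReal_lt_top hfin
end
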